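/- Assume τ > (σ_max + σ_max,2)/2 and δ < τ − σ_max,2, and let r ∈ ℝ^{M+N} satisfy Π̃ r = r. Then for every j ∈ ℕ there exists w ∈ K_j(B̃₁, r) such that ‖B̃₁ w + r‖ ≤ 2 · (1 − 2/(1 + √((τ + σ_max,2 + δ)/(τ − σ_max,2 − δ))))^j · ‖r‖. -/

import Mathlib

open Matrix

noncomputable def vnorm {ι : Type*} [Fintype ι] (x : ι → ℝ) : ℝ :=
  Real.sqrt (∑ i, x i ^ 2)

noncomputable def specNorm {ι κ : Type*} [Fintype ι] [Fintype κ] [DecidableEq κ]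
    (A : Matrix ι κ ℝ) : ℝ :=
  ‖LinearMap.toContinuousLinearMap (Matrix.toEuclideanLin A)‖

noncomputable def Krylov {ι : Type*} [Fintype ι] [DecidableEq ι]
    (B : Matrix ι ι ℝ) (r : ι → ℝ) (j : ℕ) : Submodule ℝ (ι → ℝ) :=
  Submodule.span ℝ {x | ∃ i < j, x = (B ^ i) *ᵥ r}

/-!
A residual `B̃₁ w + r` with `w` in the `j`-th Krylov space is `p(B̃₁) r` for a polynomial `p` of
degree at most `j` with `p(0) = 1`. If a symmetric operator `T` satisfies `‖T + τ‖ ≤ s < τ`, the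
shifted and rescaled Chebyshev polynomial is a suitable `p`. The Pell identity
`Tₙ² + Uₙ₋₁² = 1 + (X Uₙ₋₁)²`, evaluated at a symmetric contraction `C`, shows that `Tₙ(C)` is
again a contraction, with no recourse to the spectral theorem.

It remains to bound the compression of `B + τ` to the range of `Π̃` by `s = σ_max,2 + δ`. There
`B + τ` acts through `(a, b) ↦ aᵀ A b` with `a ⊥ ũ₁` and `b ⊥ ṽ₁`. Splitting off the first
singular triplet leaves a term of size at most `σ_max,2 ‖a‖ ‖b‖`, while the triplet itself
contributes `σ₁ (u₁ᵀ a) (v₁ᵀ b)`, at most `‖A‖ sin φ sin ψ ‖a‖ ‖b‖`, since `a` and `b` see `u₁`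
and `v₁` only through their components orthogonal to `ũ₁` and `ṽ₁`.
-/

section ChebyshevPolynomials

open Polynomial Polynomial.Chebyshev

theorem chebyshevT_sq_add_chebyshevU_sq (R : Type*) [CommRing R] (n : ℤ) :
    T R n ^ 2 + U R (n - 1) ^ 2 = 1 + (X * U R (n - 1)) ^ 2 := by
  have hS := congrArg (·.comp (2 * X)) (S_sq_add_S_sq R (n - 1))
  simp only [sub_comp, add_comp, mul_comp, pow_comp, X_comp, one_comp, S_comp_two_mul_X,
    sub_add_cancel] at hS
  rw [T_eq_U_sub_X_mul_U]
  linear_combination hS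

theorem chebyshevT_eval_half_add_inv (n : ℤ) {x : ℝ} (hx : 0 < x) :
    (T ℝ n).eval ((x + x⁻¹) / 2) = (x ^ n + (x ^ n)⁻¹) / 2 := by
  rw [← Real.cosh_log hx, T_real_cosh, ← Real.log_zpow, Real.cosh_log (zpow_pos hx n)]

/-- The MINRES convergence factor `(√κ - 1) / (√κ + 1)` of a definite operator with condition
number `κ`. -/
noncomputable def minresRate (κ : ℝ) : ℝ :=
  1 - 2 / (1 + √κ)

theorem minresRate_pos {κ : ℝ} (hκ : 1 < κ) : 0 < minresRate κ := by
  have hsqrt : 1 < √κ := by rwa [Real.lt_sqrt zero_le_one, one_pow]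
  rw [minresRate, sub_pos, div_lt_one (by positivity)]
  linarith

theorem minresRate_add_inv_div_two {κ : ℝ} (hκ : 1 < κ) :
    (minresRate κ + (minresRate κ)⁻¹) / 2 = (κ + 1) / (κ - 1) := by
  have hsq : √κ ^ 2 = κ := Real.sq_sqrt (zero_le_one.trans hκ.le)
  have hsqrt : 0 < √κ - 1 := by rw [sub_pos, Real.lt_sqrt zero_le_one]; linarith
  have hrate : minresRate κ = (√κ - 1) / (√κ + 1) := by rw [minresRate]; field_simp; ring
  have hfactor : κ - 1 = (√κ - 1) * (√κ + 1) := by linear_combination -hsq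
  rw [hrate, hfactor]
  field_simp
  linear_combination 2 * hsq

theorem inv_chebyshevT_eval_le {κ : ℝ} (hκ : 1 < κ) (n : ℕ) :
    ((T ℝ n).eval ((κ + 1) / (κ - 1)))⁻¹ ≤ 2 * minresRate κ ^ n := by
  have hpow : 0 < minresRate κ ^ n := pow_pos (minresRate_pos hκ) n
  rw [← minresRate_add_inv_div_two hκ, chebyshevT_eval_half_add_inv _ (minresRate_pos hκ),
    zpow_natCast]
  calc ((minresRate κ ^ n + (minresRate κ ^ n)⁻¹) / 2)⁻¹
      ≤ ((minresRate κ ^ n)⁻¹ / 2)⁻¹ := by gcongr; linarith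
    _ = 2 * minresRate κ ^ n := by rw [inv_div, div_inv_eq_mul]

/-- The polynomial `Tₙ((X + τ) / s) / Tₙ(τ / s)`: among the polynomials of degree at most `n` with
value `1` at `0`, the one of least deviation from zero on the interval `[-τ - s, -τ + s]`. -/
noncomputable def chebyshevResidual (τ s : ℝ) (n : ℕ) : ℝ[X] :=
  C ((T ℝ n).eval (τ / s))⁻¹ * (T ℝ n).comp (C s⁻¹ * (X + C τ))

theorem natDegree_chebyshevResidual_le (τ s : ℝ) (n : ℕ) :
    (chebyshevResidual τ s n).natDegree ≤ n :=
  calc (chebyshevResidual τ s n).natDegree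
      ≤ ((T ℝ n).comp (C s⁻¹ * (X + C τ))).natDegree := natDegree_C_mul_le _ _
    _ = n * (C s⁻¹ * (X + C τ)).natDegree := by simp [natDegree_comp]
    _ ≤ n * 1 := by gcongr; exact (natDegree_C_mul_le _ _).trans (natDegree_X_add_C τ).le
    _ = n := mul_one n

theorem chebyshevResidual_eval_zero {τ s : ℝ} (hs : 0 < s) (hsτ : s ≤ τ) (n : ℕ) :
    (chebyshevResidual τ s n).eval 0 = 1 := by
  have hT : 1 ≤ (T ℝ n).eval (τ / s) := one_le_eval_T_real n ((one_le_div hs).2 hsτ)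
  simp [chebyshevResidual, eval_comp, inv_mul_eq_div, (zero_lt_one.trans_le hT).ne']

end ChebyshevPolynomials

section SymmetricOperators

open Polynomial Polynomial.Chebyshev
open scoped RealInnerProductSpace

variable {E : Type*} [NormedAddCommGroup E] [InnerProductSpace ℝ E]

theorem isSymmetric_aeval {T : E →ₗ[ℝ] E} (hT : T.IsSymmetric) (p : ℝ[X]) :
    (aeval T p).IsSymmetric := by
  induction p using Polynomial.induction_on' with
  | add p q hp hq => simpa only [map_add] using hp.add hq
  | monomial n a =>
    rw [aeval_monomial, ← Algebra.smul_def]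
    exact (hT.pow n).smul rfl

theorem norm_sq_aeval_apply {T : E →ₗ[ℝ] E} (hT : T.IsSymmetric) (p : ℝ[X]) (x : E) :
    ‖aeval T p x‖ ^ 2 = ⟪x, aeval T (p ^ 2) x⟫ := by
  rw [← real_inner_self_eq_norm_sq, isSymmetric_aeval hT p, pow_two, map_mul, Module.End.mul_apply]

theorem norm_aeval_chebyshevT_le {T : E →ₗ[ℝ] E} (hT : T.IsSymmetric)
    (hcontr : ∀ x, ‖T x‖ ≤ ‖x‖) (n : ℤ) (x : E) :
    ‖aeval T (Chebyshev.T ℝ n) x‖ ≤ ‖x‖ := by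
  have hpell : ‖aeval T (Chebyshev.T ℝ n) x‖ ^ 2 + ‖aeval T (U ℝ (n - 1)) x‖ ^ 2
      = ‖x‖ ^ 2 + ‖T (aeval T (U ℝ (n - 1)) x)‖ ^ 2 := by
    have hTU : T (aeval T (U ℝ (n - 1)) x) = aeval T (X * U ℝ (n - 1)) x := by simp
    rw [hTU]
    simp only [norm_sq_aeval_apply hT, ← inner_add_right, ← LinearMap.add_apply, ← map_add,
      chebyshevT_sq_add_chebyshevU_sq]
    simp [inner_add_right]
  have hU : ‖T (aeval T (U ℝ (n - 1)) x)‖ ^ 2 ≤ ‖aeval T (U ℝ (n - 1)) x‖ ^ 2 := by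
    gcongr; exact hcontr _
  exact le_of_sq_le_sq (by linarith) (norm_nonneg x)

theorem norm_aeval_chebyshevResidual_le {T : E →ₗ[ℝ] E} (hT : T.IsSymmetric) {τ s : ℝ}
    (hs : 0 < s) (hsτ : s < τ) (hbound : ∀ x, ‖T x + τ • x‖ ≤ s * ‖x‖) (n : ℕ) (x : E) :
    ‖aeval T (chebyshevResidual τ s n) x‖ ≤ 2 * minresRate ((τ + s) / (τ - s)) ^ n * ‖x‖ := by
  have hsymm : (s⁻¹ • (T + τ • 1)).IsSymmetric :=
    (hT.add (LinearMap.IsSymmetric.one.smul rfl)).smul rfl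
  have hcontr (y : E) : ‖(s⁻¹ • (T + τ • 1)) y‖ ≤ ‖y‖ := by
    rw [LinearMap.smul_apply, norm_smul, Real.norm_of_nonneg (inv_nonneg.2 hs.le),
      inv_mul_le_iff₀ hs]
    exact hbound y
  have haeval : aeval T (chebyshevResidual τ s n)
      = ((Chebyshev.T ℝ n).eval (τ / s))⁻¹ • aeval (s⁻¹ • (T + τ • 1)) (Chebyshev.T ℝ n) := by
    simp [chebyshevResidual, aeval_comp, Algebra.algebraMap_eq_smul_one]
  have hT0 : 0 ≤ (Chebyshev.T ℝ n).eval (τ / s) :=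
    zero_le_one.trans (one_le_eval_T_real n ((one_le_div hs).2 hsτ.le))
  have hinv : ((Chebyshev.T ℝ n).eval (τ / s))⁻¹ ≤ 2 * minresRate ((τ + s) / (τ - s)) ^ n := by
    have hτs : 0 < τ - s := sub_pos.2 hsτ
    have hκ : 1 < (τ + s) / (τ - s) := by rw [one_lt_div hτs]; linarith
    have hcayley : ((τ + s) / (τ - s) + 1) / ((τ + s) / (τ - s) - 1) = τ / s := by
      have hadd : (τ + s) / (τ - s) + 1 = 2 * τ / (τ - s) := by field_simp; ring
      have hsub : (τ + s) / (τ - s) - 1 = 2 * s / (τ - s) := by field_simp; ring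
      rw [hadd, hsub, div_div_div_cancel_right₀ hτs.ne', mul_div_mul_left _ _ two_ne_zero]
    exact hcayley ▸ inv_chebyshevT_eval_le hκ n
  rw [haeval, LinearMap.smul_apply, norm_smul, Real.norm_of_nonneg (inv_nonneg.2 hT0)]
  exact mul_le_mul hinv (norm_aeval_chebyshevT_le hsymm hcontr n x) (norm_nonneg _)
    ((inv_nonneg.2 hT0).trans hinv)

theorem exists_residual_polynomial {T : E →ₗ[ℝ] E} (hT : T.IsSymmetric) {τ s : ℝ}
    (hs : 0 ≤ s) (hsτ : s < τ) (hbound : ∀ x, ‖T x + τ • x‖ ≤ s * ‖x‖) (n : ℕ) :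
    ∃ p : ℝ[X], p.natDegree ≤ n ∧ p.eval 0 = 1 ∧
      ∀ x, ‖aeval T p x‖ ≤ 2 * minresRate ((τ + s) / (τ - s)) ^ n * ‖x‖ := by
  rcases hs.eq_or_lt with rfl | hs
  · have hrate : minresRate ((τ + 0) / (τ - 0)) = 0 := by
      norm_num [minresRate, hsτ.ne']
    rw [hrate]
    cases n with
    | zero => exact ⟨1, by simp, by simp, fun x => by simp; linarith [norm_nonneg x]⟩
    | succ n =>
      refine ⟨C τ⁻¹ * X + 1, ?_, by simp, fun x => ?_⟩
      · compute_degree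
        omega
      · have hTx : T x = -(τ • x) := by
          rw [← add_eq_zero_iff_eq_neg, ← norm_le_zero_iff]
          simpa using hbound x
        simp [hTx, hsτ.ne', Algebra.algebraMap_eq_smul_one]
  · exact ⟨chebyshevResidual τ s n, natDegree_chebyshevResidual_le τ s n,
      chebyshevResidual_eval_zero hs hsτ.le n, norm_aeval_chebyshevResidual_le hT hs hsτ hbound n⟩

end SymmetricOperators

section Krylov

open Polynomial

theorem coe_aeval_restrict_apply {R M : Type*} [CommSemiring R] [AddCommMonoid M] [Module R M]
    {f : Module.End R M} {W : Submodule R M} (hf : ∀ x ∈ W, f x ∈ W) (p : R[X]) (x : W) :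
    (aeval (f.restrict hf) p x : M) = aeval f p x := by
  induction p using Polynomial.induction_on' with
  | add p q hp hq => simp [hp, hq]
  | monomial n a =>
    rw [aeval_monomial, aeval_monomial, ← Algebra.smul_def, ← Algebra.smul_def,
      Module.End.pow_restrict n]
    rfl

variable {ι : Type*} [Fintype ι]

theorem vnorm_eq_norm_toLp (x : ι → ℝ) : vnorm x = ‖WithLp.toLp 2 x‖ := by
  simp [vnorm, EuclideanSpace.norm_eq]

theorem vnorm_nonneg (x : ι → ℝ) : 0 ≤ vnorm x := Real.sqrt_nonneg _

theorem vnorm_sq_eq_dotProduct (x : ι → ℝ) : vnorm x ^ 2 = x ⬝ᵥ x := by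
  rw [vnorm, Real.sq_sqrt (Finset.sum_nonneg fun i _ => sq_nonneg (x i))]
  simp only [dotProduct, sq]

theorem vnorm_projected_mulVec_add_smul_le {B P : Matrix ι ι ℝ} (hP : P.IsSymm)
    (hPP : IsIdempotentElem P) {τ s : ℝ} (hs : 0 ≤ s)
    (hform : ∀ x y, P *ᵥ x = x → P *ᵥ y = y →
      |y ⬝ᵥ (B *ᵥ x + τ • x)| ≤ s * (vnorm y * vnorm x)) {x : ι → ℝ} (hx : P *ᵥ x = x) :
    vnorm ((P * B * P) *ᵥ x + τ • x) ≤ s * vnorm x := by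
  have hcompress : (P * B * P) *ᵥ x + τ • x = P *ᵥ (B *ᵥ x + τ • x) := by
    rw [← mulVec_mulVec, ← mulVec_mulVec, hx, mulVec_add, mulVec_smul, hx]
  rw [hcompress]
  set z := P *ᵥ (B *ᵥ x + τ • x) with hz_def
  have hz : P *ᵥ z = z := by rw [hz_def, mulVec_mulVec, hPP.eq]
  have hsq : vnorm z ^ 2 ≤ vnorm z * (s * vnorm x) := by
    calc vnorm z ^ 2 = (P *ᵥ z) ⬝ᵥ (B *ᵥ x + τ • x) := by
          rw [vnorm_sq_eq_dotProduct, ← hP.eq, mulVec_transpose, ← dotProduct_mulVec]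
      _ = z ⬝ᵥ (B *ᵥ x + τ • x) := by rw [hz]
      _ ≤ |z ⬝ᵥ (B *ᵥ x + τ • x)| := le_abs_self _
      _ ≤ vnorm z * (s * vnorm x) := (hform x z hx hz).trans_eq (by ring)
  rcases (vnorm_nonneg z).eq_or_lt with hz0 | hz0
  · rw [← hz0]
    exact mul_nonneg hs (vnorm_nonneg x)
  · rw [sq] at hsq
    exact le_of_mul_le_mul_left hsq hz0

variable [DecidableEq ι]

theorem toLp_aeval_mulVec (B : Matrix ι ι ℝ) (p : ℝ[X]) (r : ι → ℝ) :
    WithLp.toLp 2 (aeval B p *ᵥ r) = aeval (toEuclideanLin B) p (WithLp.toLp 2 r) :=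
  congrArg (· (WithLp.toLp 2 r)) (aeval_algHom_apply (toLpLinAlgEquiv (R := ℝ) (n := ι) 2) B p).symm

theorem exists_mem_krylov_mulVec_add_eq_aeval (B : Matrix ι ι ℝ) (r : ι → ℝ) {j : ℕ} {p : ℝ[X]}
    (hdeg : p.natDegree ≤ j) (hp0 : p.eval 0 = 1) :
    ∃ w ∈ Krylov B r j, B *ᵥ w + r = aeval B p *ᵥ r := by
  refine ⟨∑ i ∈ Finset.range j, p.coeff (i + 1) • (B ^ i *ᵥ r), ?_, ?_⟩
  · exact Submodule.sum_mem _ fun i hi =>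
      Submodule.smul_mem _ _ (Submodule.subset_span ⟨i, Finset.mem_range.1 hi, rfl⟩)
  · rw [← coeff_zero_eq_eval_zero] at hp0
    rw [aeval_eq_sum_range' (Nat.lt_succ_of_le hdeg), Finset.sum_range_succ', add_mulVec,
      sum_mulVec, mulVec_sum]
    simp [hp0, mulVec_smul, smul_mulVec, mulVec_mulVec, pow_succ']

theorem exists_mem_krylov_vnorm_le_of_invariant {B : Matrix ι ι ℝ} (hB : B.IsSymm)
    {W : Submodule ℝ (ι → ℝ)} (hW : ∀ x ∈ W, B *ᵥ x ∈ W) {τ s : ℝ} (hs : 0 ≤ s) (hsτ : s < τ)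
    (hbound : ∀ x ∈ W, vnorm (B *ᵥ x + τ • x) ≤ s * vnorm x) {r : ι → ℝ} (hr : r ∈ W) (j : ℕ) :
    ∃ w ∈ Krylov B r j,
      vnorm (B *ᵥ w + r) ≤ 2 * minresRate ((τ + s) / (τ - s)) ^ j * vnorm r := by
  let W' := W.comap (WithLp.linearEquiv 2 ℝ (ι → ℝ)).toLinearMap
  have hW' : ∀ x ∈ W', toEuclideanLin B x ∈ W' := fun x hx => hW x.ofLp hx
  have hsymm : ((toEuclideanLin B).restrict hW').IsSymmetric :=
    (isSymmetric_toEuclideanLin_iff.2 hB).restrict_invariant hW'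
  obtain ⟨p, hdeg, hp0, hp⟩ := exists_residual_polynomial hsymm hs hsτ
    (fun x => by
      have hx := hbound x.1.ofLp x.2
      rwa [vnorm_eq_norm_toLp, vnorm_eq_norm_toLp] at hx) j
  obtain ⟨w, hw, hres⟩ := exists_mem_krylov_mulVec_add_eq_aeval B r hdeg hp0
  refine ⟨w, hw, ?_⟩
  rw [hres, vnorm_eq_norm_toLp, vnorm_eq_norm_toLp, toLp_aeval_mulVec]
  have hpr := hp ⟨WithLp.toLp 2 r, hr⟩
  rwa [Submodule.coe_norm, coe_aeval_restrict_apply] at hpr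

theorem exists_mem_krylov_vnorm_le_of_projected {B P : Matrix ι ι ℝ} (hB : B.IsSymm)
    (hP : P.IsSymm) (hPP : IsIdempotentElem P) {τ s : ℝ} (hs : 0 ≤ s) (hsτ : s < τ)
    (hform : ∀ x y, P *ᵥ x = x → P *ᵥ y = y →
      |y ⬝ᵥ (B *ᵥ x + τ • x)| ≤ s * (vnorm y * vnorm x))
    {r : ι → ℝ} (hr : P *ᵥ r = r) (j : ℕ) :
    ∃ w ∈ Krylov (P * B * P) r j, vnorm ((P * B * P) *ᵥ w + r) ≤
      2 * minresRate ((τ + s) / (τ - s)) ^ j * vnorm r := by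
  have hPBP : (P * B * P).IsSymm := by
    rw [IsSymm, transpose_mul, transpose_mul, hP.eq, hB.eq, Matrix.mul_assoc]
  refine exists_mem_krylov_vnorm_le_of_invariant (W := LinearMap.eqLocus P.mulVecLin .id) hPBP
    (fun x _ => ?_) hs hsτ (fun x hx => vnorm_projected_mulVec_add_smul_le hP hPP hs hform hx) hr j
  change P *ᵥ ((P * B * P) *ᵥ x) = (P * B * P) *ᵥ x
  rw [mulVec_mulVec, ← Matrix.mul_assoc, ← Matrix.mul_assoc, hPP.eq]

end Krylov

section TiltedSingularVectors

open scoped RealInnerProductSpace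

variable {E F : Type*} [NormedAddCommGroup E] [InnerProductSpace ℝ E]
  [NormedAddCommGroup F] [InnerProductSpace ℝ F]

theorem norm_sub_inner_smul_sq {u : E} (hu : ‖u‖ = 1) (x : E) :
    ‖x - ⟪u, x⟫ • u‖ ^ 2 = ‖x‖ ^ 2 - ⟪u, x⟫ ^ 2 := by
  rw [norm_sub_sq_real, norm_smul, real_inner_smul_right, hu, real_inner_comm u x, mul_one,
    Real.norm_eq_abs, sq_abs]
  ring

theorem abs_inner_le_sqrt_one_sub_inner_sq_mul_norm {u u' a : E} (hu : ‖u‖ = 1) (hu' : ‖u'‖ = 1)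
    (ha : ⟪u', a⟫ = 0) : |⟪u, a⟫| ≤ √(1 - ⟪u, u'⟫ ^ 2) * ‖a‖ := by
  have hnorm : ‖u - ⟪u', u⟫ • u'‖ = √(1 - ⟪u, u'⟫ ^ 2) := by
    rw [← Real.sqrt_sq (norm_nonneg _), norm_sub_inner_smul_sq hu', hu, one_pow,
      real_inner_comm u u']
  have hinner : ⟪u, a⟫ = ⟪u - ⟪u', u⟫ • u', a⟫ := by
    rw [inner_sub_left, real_inner_smul_left, ha, mul_zero, sub_zero]
  rw [hinner, ← hnorm]
  exact abs_real_inner_le_norm _ _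

theorem abs_inner_map_le_of_norm_map_le_of_inner_eq_zero {A : F →ₗ[ℝ] E} {u : E} {v : F}
    (hv : ‖v‖ = 1) {σ : ℝ} (hAv : A v = σ • u) {s : ℝ} (hs : 0 ≤ s)
    (hA : ∀ x, ⟪v, x⟫ = 0 → ‖A x‖ ≤ s * ‖x‖) (a : E) (b : F) :
    |⟪a, A b⟫| ≤ |σ| * (|⟪u, a⟫| * |⟪v, b⟫|) + s * (‖a‖ * ‖b‖) := by
  set c := b - ⟪v, b⟫ • v with hc_def
  have hvc : ⟪v, c⟫ = 0 := by
    rw [inner_sub_right, real_inner_smul_right, real_inner_self_eq_norm_sq, hv]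
    ring
  have hcb : ‖c‖ ≤ ‖b‖ := by
    refine le_of_sq_le_sq ?_ (norm_nonneg b)
    rw [norm_sub_inner_smul_sq hv]
    exact sub_le_self _ (sq_nonneg _)
  have hsplit : ⟪a, A b⟫ = σ * (⟪u, a⟫ * ⟪v, b⟫) + ⟪a, A c⟫ := by
    rw [hc_def, map_sub, map_smul, hAv, inner_sub_right, real_inner_smul_right,
      real_inner_smul_right, real_inner_comm u a]
    ring
  have hrest : |⟪a, A c⟫| ≤ s * (‖a‖ * ‖b‖) :=
    calc |⟪a, A c⟫| ≤ ‖a‖ * ‖A c‖ := abs_real_inner_le_norm _ _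
      _ ≤ ‖a‖ * (s * ‖b‖) := by gcongr; exact (hA c hvc).trans (by gcongr)
      _ = s * (‖a‖ * ‖b‖) := mul_left_comm _ _ _
  calc |⟪a, A b⟫| ≤ |σ * (⟪u, a⟫ * ⟪v, b⟫)| + |⟪a, A c⟫| := hsplit ▸ abs_add_le _ _
    _ ≤ |σ| * (|⟪u, a⟫| * |⟪v, b⟫|) + s * (‖a‖ * ‖b‖) := by
      rw [abs_mul, abs_mul]
      gcongr

theorem abs_inner_map_le_of_inner_eq_zero {A : F →L[ℝ] E} {u u' : E} {v v' : F} (hu : ‖u‖ = 1)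
    (hu' : ‖u'‖ = 1) (hv : ‖v‖ = 1) (hv' : ‖v'‖ = 1) {σ : ℝ} (hAv : A v = σ • u) {s : ℝ}
    (hs : 0 ≤ s) (hA : ∀ x, ⟪v, x⟫ = 0 → ‖A x‖ ≤ s * ‖x‖) {a : E} {b : F} (ha : ⟪u', a⟫ = 0)
    (hb : ⟪v', b⟫ = 0) :
    |⟪a, A b⟫| ≤ (s + ‖A‖ * (√(1 - ⟪u, u'⟫ ^ 2) + √(1 - ⟪v, v'⟫ ^ 2)) ^ 2) * (‖a‖ * ‖b‖) := by
  have hσ : |σ| ≤ ‖A‖ := by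
    simpa [hAv, norm_smul, hu, hv] using A.le_opNorm v
  set sinφ := √(1 - ⟪u, u'⟫ ^ 2)
  set sinψ := √(1 - ⟪v, v'⟫ ^ 2)
  have hφ : 0 ≤ sinφ := Real.sqrt_nonneg _
  have hψ : 0 ≤ sinψ := Real.sqrt_nonneg _
  have hsin : sinφ * sinψ ≤ (sinφ + sinψ) ^ 2 := by nlinarith
  calc |⟪a, A b⟫| ≤ |σ| * (|⟪u, a⟫| * |⟪v, b⟫|) + s * (‖a‖ * ‖b‖) :=
        abs_inner_map_le_of_norm_map_le_of_inner_eq_zero (A := A.toLinearMap) hv hAv hs hA a b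
    _ ≤ ‖A‖ * ((sinφ * ‖a‖) * (sinψ * ‖b‖)) + s * (‖a‖ * ‖b‖) := by
      gcongr
      · exact abs_inner_le_sqrt_one_sub_inner_sq_mul_norm hu hu' ha
      · exact abs_inner_le_sqrt_one_sub_inner_sq_mul_norm hv hv' hb
    _ = (s + ‖A‖ * (sinφ * sinψ)) * (‖a‖ * ‖b‖) := by ring
    _ ≤ (s + ‖A‖ * (sinφ + sinψ) ^ 2) * (‖a‖ * ‖b‖) := by gcongr

end TiltedSingularVectors

section BlockMatrices

theorem isSymm_one_sub_vecMulVec {m R : Type*} [DecidableEq m] [CommRing R] (u : m → R) :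
    (1 - vecMulVec u u).IsSymm := by
  rw [IsSymm, transpose_sub, transpose_one, transpose_vecMulVec]

variable {m n R : Type*} [Fintype m] [DecidableEq m] [CommRing R]

theorem isIdempotentElem_one_sub_vecMulVec {u : m → R} (hu : u ⬝ᵥ u = 1) :
    IsIdempotentElem (1 - vecMulVec u u) := by
  refine IsIdempotentElem.one_sub ?_
  rw [IsIdempotentElem, vecMulVec_mul_vecMulVec, hu, one_smul]

theorem dotProduct_eq_zero_of_one_sub_vecMulVec_mulVec_eq {u a : m → R} (hu : u ⬝ᵥ u = 1)
    (ha : (1 - vecMulVec u u) *ᵥ a = a) : u ⬝ᵥ a = 0 := by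
  rw [← ha, dotProduct_mulVec, vecMul_sub, vecMul_one, vecMul_vecMulVec, hu, one_smul, sub_self,
    zero_dotProduct]

theorem dotProduct_fromBlocks_mulVec_add_smul [Fintype n] [DecidableEq n]
    (A : Matrix m n R) (τ : R) (x y : m ⊕ n → R) :
    y ⬝ᵥ (fromBlocks ((-τ) • 1) A Aᵀ ((-τ) • 1) *ᵥ x + τ • x) =
      (y ∘ Sum.inl) ⬝ᵥ (A *ᵥ (x ∘ Sum.inr)) + (x ∘ Sum.inl) ⬝ᵥ (A *ᵥ (y ∘ Sum.inr)) := by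
  have hshift : fromBlocks ((-τ) • 1) A Aᵀ ((-τ) • 1) *ᵥ x + τ • x =
      Sum.elim (A *ᵥ (x ∘ Sum.inr)) (Aᵀ *ᵥ (x ∘ Sum.inl)) := by
    ext (i | i) <;> rw [Pi.add_apply, fromBlocks_mulVec] <;> simp [-neg_smul, smul_mulVec]
  rw [hshift, ← Sum.elim_comp_inl_inr y, sumElim_dotProduct_sumElim, Sum.elim_comp_inl_inr,
    mulVec_transpose, dotProduct_comm (y ∘ Sum.inr), ← dotProduct_mulVec]

end BlockMatrices

section ApproximateSingularVectors

variable {m n : Type*} [Fintype m] [Fintype n]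

theorem inner_toLp_eq_dotProduct (x y : m → ℝ) :
    inner ℝ (WithLp.toLp 2 x) (WithLp.toLp 2 y) = x ⬝ᵥ y := by
  rw [EuclideanSpace.inner_toLp_toLp, star_trivial, dotProduct_comm]

theorem abs_dotProduct_mulVec_le [DecidableEq n] {A : Matrix m n ℝ} {u u' : m → ℝ} {v v' : n → ℝ}
    (hu : vnorm u = 1) (hu' : vnorm u' = 1) (hv : vnorm v = 1) (hv' : vnorm v' = 1) {σ : ℝ}
    (hAv : A *ᵥ v = σ • u) {s : ℝ} (hs : 0 ≤ s)
    (hA : ∀ x, v ⬝ᵥ x = 0 → vnorm (A *ᵥ x) ≤ s * vnorm x) {a : m → ℝ} {b : n → ℝ}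
    (ha : u' ⬝ᵥ a = 0) (hb : v' ⬝ᵥ b = 0) :
    |a ⬝ᵥ (A *ᵥ b)| ≤
      (s + specNorm A * (√(1 - (u ⬝ᵥ u') ^ 2) + √(1 - (v ⬝ᵥ v') ^ 2)) ^ 2) *
        (vnorm a * vnorm b) := by
  simp only [vnorm_eq_norm_toLp, ← inner_toLp_eq_dotProduct] at hu hu' hv hv' hA ha hb ⊢
  exact abs_inner_map_le_of_inner_eq_zero
    (A := LinearMap.toContinuousLinearMap (toEuclideanLin A)) hu hu' hv hv'
    (congrArg (WithLp.toLp 2) hAv) hs (fun x => hA x.ofLp) ha hb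

theorem vnorm_sq_eq_inl_add_inr (x : m ⊕ n → ℝ) :
    vnorm x ^ 2 = vnorm (x ∘ Sum.inl) ^ 2 + vnorm (x ∘ Sum.inr) ^ 2 := by
  simp only [vnorm_sq_eq_dotProduct, dotProduct, Fintype.sum_sum_type, Function.comp_apply]

theorem vnorm_inl_mul_inr_add_le (x y : m ⊕ n → ℝ) :
    vnorm (y ∘ Sum.inl) * vnorm (x ∘ Sum.inr) + vnorm (x ∘ Sum.inl) * vnorm (y ∘ Sum.inr)
      ≤ vnorm y * vnorm x := by
  refine le_of_sq_le_sq ?_ (mul_nonneg (vnorm_nonneg y) (vnorm_nonneg x))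
  rw [mul_pow, vnorm_sq_eq_inl_add_inr x, vnorm_sq_eq_inl_add_inr y]
  linarith [sq_nonneg (vnorm (y ∘ Sum.inl) * vnorm (x ∘ Sum.inl) -
    vnorm (y ∘ Sum.inr) * vnorm (x ∘ Sum.inr))]

variable [DecidableEq m] [DecidableEq n]

theorem abs_dotProduct_fromBlocks_mulVec_add_smul_le {A : Matrix m n ℝ} {τ c : ℝ} (hc : 0 ≤ c)
    {x y : m ⊕ n → ℝ}
    (hyx : |(y ∘ Sum.inl) ⬝ᵥ (A *ᵥ (x ∘ Sum.inr))| ≤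
      c * (vnorm (y ∘ Sum.inl) * vnorm (x ∘ Sum.inr)))
    (hxy : |(x ∘ Sum.inl) ⬝ᵥ (A *ᵥ (y ∘ Sum.inr))| ≤
      c * (vnorm (x ∘ Sum.inl) * vnorm (y ∘ Sum.inr))) :
    |y ⬝ᵥ (fromBlocks ((-τ) • 1) A Aᵀ ((-τ) • 1) *ᵥ x + τ • x)| ≤ c * (vnorm y * vnorm x) := by
  rw [dotProduct_fromBlocks_mulVec_add_smul]
  refine (abs_add_le _ _).trans ((add_le_add hyx hxy).trans ?_)
  rw [← mul_add]
  exact mul_le_mul_of_nonneg_left (vnorm_inl_mul_inr_add_le x y) hc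

theorem exists_mem_krylov_vnorm_le_of_approx_singular_vectors {A : Matrix m n ℝ} {u u' : m → ℝ}
    {v v' : n → ℝ} (hu : vnorm u = 1) (hu' : vnorm u' = 1) (hv : vnorm v = 1) (hv' : vnorm v' = 1)
    {σ : ℝ} (hAv : A *ᵥ v = σ • u) {s τ δ : ℝ} (hs : 0 ≤ s)
    (hA : ∀ x, v ⬝ᵥ x = 0 → vnorm (A *ᵥ x) ≤ s * vnorm x)
    (hδ : δ = specNorm A * (√(1 - (u ⬝ᵥ u') ^ 2) + √(1 - (v ⬝ᵥ v') ^ 2)) ^ 2)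
    (hδτ : δ < τ - s) {B P : Matrix (m ⊕ n) (m ⊕ n) ℝ}
    (hB : B = fromBlocks ((-τ) • 1) A Aᵀ ((-τ) • 1))
    (hP : P = fromBlocks (1 - vecMulVec u' u') 0 0 (1 - vecMulVec v' v'))
    {r : m ⊕ n → ℝ} (hr : P *ᵥ r = r) (j : ℕ) :
    ∃ w ∈ Krylov (P * B * P) r j, vnorm ((P * B * P) *ᵥ w + r) ≤
      2 * minresRate ((τ + (s + δ)) / (τ - (s + δ))) ^ j * vnorm r := by
  have huu : u' ⬝ᵥ u' = 1 := by rw [← vnorm_sq_eq_dotProduct, hu', one_pow]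
  have hvv : v' ⬝ᵥ v' = 1 := by rw [← vnorm_sq_eq_dotProduct, hv', one_pow]
  have hBsymm : B.IsSymm := hB ▸ IsSymm.fromBlocks (isSymm_one.smul _) rfl (isSymm_one.smul _)
  have hPsymm : P.IsSymm := hP ▸ IsSymm.fromBlocks (isSymm_one_sub_vecMulVec u') transpose_zero
    (isSymm_one_sub_vecMulVec v')
  have hPidem : IsIdempotentElem P := by
    rw [hP, IsIdempotentElem, fromBlocks_multiply]
    simp [(isIdempotentElem_one_sub_vecMulVec huu).eq, (isIdempotentElem_one_sub_vecMulVec hvv).eq]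
  have horth (x : m ⊕ n → ℝ) (hx : P *ᵥ x = x) :
      u' ⬝ᵥ (x ∘ Sum.inl) = 0 ∧ v' ⬝ᵥ (x ∘ Sum.inr) = 0 := by
    have hxl := congrArg (· ∘ Sum.inl) hx
    have hxr := congrArg (· ∘ Sum.inr) hx
    simp only [hP, fromBlocks_mulVec, zero_mulVec, add_zero, zero_add, Sum.elim_comp_inl,
      Sum.elim_comp_inr] at hxl hxr
    exact ⟨dotProduct_eq_zero_of_one_sub_vecMulVec_mulVec_eq huu hxl,
      dotProduct_eq_zero_of_one_sub_vecMulVec_mulVec_eq hvv hxr⟩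
  have hbound {x y : m ⊕ n → ℝ} (hx : P *ᵥ x = x) (hy : P *ᵥ y = y) :
      |(y ∘ Sum.inl) ⬝ᵥ (A *ᵥ (x ∘ Sum.inr))| ≤
        (s + δ) * (vnorm (y ∘ Sum.inl) * vnorm (x ∘ Sum.inr)) :=
    hδ ▸ abs_dotProduct_mulVec_le hu hu' hv hv' hAv hs hA (horth y hy).1 (horth x hx).2
  have hsδ : 0 ≤ s + δ := add_nonneg hs (hδ ▸ mul_nonneg (norm_nonneg _) (sq_nonneg _))
  exact exists_mem_krylov_vnorm_le_of_projected hBsymm hPsymm hPidem hsδ (by linarith)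
    (fun x y hx hy => hB ▸ abs_dotProduct_fromBlocks_mulVec_add_smul_le hsδ (hbound hx hy)
      (hbound hy hx)) hr j

end ApproximateSingularVectors

section SingularValueDecomposition

theorem transpose_mul_self_submatrix_eq_one {m p R : Type*} [Fintype m] [DecidableEq m]
    [DecidableEq p] [Semiring R] {U : Matrix m m R} (hU : Uᵀ * U = 1) {f : p → m}
    (hf : Function.Injective f) : (U.submatrix id f)ᵀ * U.submatrix id f = 1 := by
  rw [transpose_submatrix, ← submatrix_mul _ _ _ _ _ Function.bijective_id, hU, submatrix_one _ hf]

theorem mul_eq_submatrix_mul_diagonal {m p R : Type*} [Fintype m] [DecidableEq m] [Fintype p]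
    [DecidableEq p] [Semiring R] (U : Matrix m m R) {f : p → m} {S : Matrix m p R} {σ : p → R}
    (hS : ∀ i k, S i k = if i = f k then σ k else 0) :
    U * S = U.submatrix id f * diagonal σ := by
  ext i k
  rw [mul_diagonal]
  simp [mul_apply, hS]

theorem mulVec_col_of_svd {m n p R : Type*} [Fintype n] [Fintype p] [DecidableEq p]
    [CommSemiring R] {U : Matrix m p R} {V : Matrix n p R} (hV : Vᵀ * V = 1) (σ : p → R) (k : p) :
    (U * diagonal σ * Vᵀ) *ᵥ V.col k = σ k • U.col k := by
  rw [← mulVec_single_one V, mulVec_mulVec, Matrix.mul_assoc, hV, Matrix.mul_one, ← mulVec_mulVec,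
    diagonal_mulVec_single, mul_one, mulVec_single, op_smul_eq_smul]

theorem vnorm_col_of_transpose_mul_self_eq_one {m p : Type*} [Fintype m] [DecidableEq p]
    {U : Matrix m p ℝ} (hU : Uᵀ * U = 1) (k : p) : vnorm (U.col k) = 1 := by
  refine Real.sqrt_eq_one.2 ?_
  simpa [mul_apply, sq] using congrFun (congrFun hU k) k

variable {m n p : Type*} [Fintype m] [Fintype n] [Fintype p] [DecidableEq p]

theorem vnorm_mulVec_of_transpose_mul_self_eq_one {U : Matrix m p ℝ} (hU : Uᵀ * U = 1)
    (x : p → ℝ) : vnorm (U *ᵥ x) = vnorm x := by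
  rw [← sq_eq_sq₀ (vnorm_nonneg _) (vnorm_nonneg _), vnorm_sq_eq_dotProduct, dotProduct_mulVec,
    ← mulVec_transpose, mulVec_mulVec, hU, one_mulVec, vnorm_sq_eq_dotProduct]

theorem vnorm_transpose_mulVec_le_of_transpose_mul_self_eq_one {V : Matrix n p ℝ}
    (hV : Vᵀ * V = 1) (x : n → ℝ) : vnorm (Vᵀ *ᵥ x) ≤ vnorm x := by
  have hsub : vnorm (x - V *ᵥ (Vᵀ *ᵥ x)) ^ 2 = vnorm x ^ 2 - vnorm (Vᵀ *ᵥ x) ^ 2 := by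
    have hVx : (V *ᵥ (Vᵀ *ᵥ x)) ⬝ᵥ x = vnorm (Vᵀ *ᵥ x) ^ 2 := by
      rw [dotProduct_comm, dotProduct_mulVec, ← mulVec_transpose, vnorm_sq_eq_dotProduct]
    rw [vnorm_sq_eq_dotProduct, sub_dotProduct, dotProduct_sub, dotProduct_sub,
      dotProduct_comm x (V *ᵥ _), hVx, ← vnorm_sq_eq_dotProduct, ← vnorm_sq_eq_dotProduct,
      vnorm_mulVec_of_transpose_mul_self_eq_one hV]
    ring
  refine le_of_sq_le_sq ?_ (vnorm_nonneg x)
  linarith [sq_nonneg (vnorm (x - V *ᵥ (Vᵀ *ᵥ x)))]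

theorem vnorm_diagonal_mulVec_le {σ y : p → ℝ} {s : ℝ} (hs : 0 ≤ s) {k : p}
    (hσ : ∀ i ≠ k, |σ i| ≤ s) (hy : y k = 0) : vnorm (diagonal σ *ᵥ y) ≤ s * vnorm y := by
  refine Real.sqrt_le_iff.2 ⟨mul_nonneg hs (vnorm_nonneg y), ?_⟩
  rw [mul_pow, vnorm, Real.sq_sqrt (Finset.sum_nonneg fun i _ => sq_nonneg (y i)), Finset.mul_sum]
  refine Finset.sum_le_sum fun i _ => ?_
  rw [mulVec_diagonal, mul_pow]
  rcases eq_or_ne i k with rfl | hik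
  · simp [hy]
  · exact mul_le_mul_of_nonneg_right (sq_le_sq.2 ((hσ i hik).trans (le_abs_self s))) (sq_nonneg _)

theorem vnorm_mulVec_le_of_svd {U : Matrix m p ℝ} {V : Matrix n p ℝ} (hU : Uᵀ * U = 1)
    (hV : Vᵀ * V = 1) {σ : p → ℝ} {s : ℝ} (hs : 0 ≤ s) {k : p} (hσ : ∀ i ≠ k, |σ i| ≤ s)
    {x : n → ℝ} (hx : V.col k ⬝ᵥ x = 0) :
    vnorm ((U * diagonal σ * Vᵀ) *ᵥ x) ≤ s * vnorm x :=
  calc vnorm ((U * diagonal σ * Vᵀ) *ᵥ x) = vnorm (diagonal σ *ᵥ (Vᵀ *ᵥ x)) := by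
        rw [← mulVec_mulVec, ← mulVec_mulVec, vnorm_mulVec_of_transpose_mul_self_eq_one hU]
    _ ≤ s * vnorm (Vᵀ *ᵥ x) := vnorm_diagonal_mulVec_le hs hσ hx
    _ ≤ s * vnorm x := by
      gcongr
      exact vnorm_transpose_mulVec_le_of_transpose_mul_self_eq_one hV x

end SingularValueDecomposition

theorem minres_bound_approx_largest_general {m n p : Type*} [Fintype m] [DecidableEq m] [Fintype n]
    [DecidableEq n] [Fintype p] [DecidableEq p] {A : Matrix m n ℝ} {U : Matrix m p ℝ}
    {V : Matrix n p ℝ} (hU : Uᵀ * U = 1) (hV : Vᵀ * V = 1) {σ : p → ℝ}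
    (hA : A = U * diagonal σ * Vᵀ) {k : p} {s τ δ : ℝ} (hs : 0 ≤ s) (hσ : ∀ i ≠ k, |σ i| ≤ s)
    {u' : m → ℝ} (hu' : ∑ i, u' i ^ 2 = 1) {v' : n → ℝ} (hv' : ∑ i, v' i ^ 2 = 1)
    (hδ : δ = specNorm A * (√(1 - (U.col k ⬝ᵥ u') ^ 2) + √(1 - (V.col k ⬝ᵥ v') ^ 2)) ^ 2)
    (hδτ : δ < τ - s) {B P : Matrix (m ⊕ n) (m ⊕ n) ℝ}
    (hB : B = fromBlocks ((-τ) • 1) A Aᵀ ((-τ) • 1))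
    (hP : P = fromBlocks (1 - vecMulVec u' u') 0 0 (1 - vecMulVec v' v'))
    {r : m ⊕ n → ℝ} (hr : P *ᵥ r = r) (j : ℕ) :
    ∃ w ∈ Krylov (P * B * P) r j, vnorm ((P * B * P) *ᵥ w + r) ≤
      2 * (1 - 2 / (1 + √((τ + s + δ) / (τ - s - δ)))) ^ j * vnorm r := by
  rw [add_assoc, sub_sub]
  exact exists_mem_krylov_vnorm_le_of_approx_singular_vectors
    (vnorm_col_of_transpose_mul_self_eq_one hU k) (Real.sqrt_eq_one.2 hu')
    (vnorm_col_of_transpose_mul_self_eq_one hV k) (Real.sqrt_eq_one.2 hv')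
    (hA ▸ mulVec_col_of_svd hV σ k) hs (fun x hx => hA ▸ vnorm_mulVec_le_of_svd hU hV hs hσ hx)
    hδ hδτ hB hP hr j

/-- Theorem 3.5(i). MINRES bound for the JDSVD correction equation with
approximate singular vectors, in the case `σ₁ = σ_max`. -/
theorem minres_bound_approx_largest {M N : ℕ} (hN : 2 ≤ N) (hMN : N ≤ M)
    (A : Matrix (Fin M) (Fin N) ℝ)
    (U : Matrix (Fin M) (Fin M) ℝ) (V : Matrix (Fin N) (Fin N) ℝ)
    (hU : Uᵀ * U = 1) (hV : Vᵀ * V = 1)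
    (σ : Fin N → ℝ) (hσ : ∀ i, 0 ≤ σ i)
    (S : Matrix (Fin M) (Fin N) ℝ)
    (hS : ∀ i j, S i j = if (i : ℕ) = (j : ℕ) then σ j else 0)
    (hA : A = U * S * Vᵀ)
    (τ : ℝ) (hτ0 : 0 ≤ τ)
    (hclosest : ∀ i : Fin N, i ≠ ⟨0, by omega⟩ → |σ ⟨0, by omega⟩ - τ| < |σ i - τ|)
    (σmax σmax2 : ℝ)
    (hσmax : IsGreatest (Set.range σ) σmax)
    (hσmax2 : IsGreatest (σ '' {i : Fin N | i ≠ ⟨0, by omega⟩}) σmax2)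
    (hτ : (σmax + σmax2) / 2 < τ)
    (u1 : Fin M → ℝ) (hu1 : u1 = fun i => U i ⟨0, by omega⟩)
    (v1 : Fin N → ℝ) (hv1 : v1 = fun i => V i ⟨0, by omega⟩)
    (u1t : Fin M → ℝ) (hu1t : ∑ i, u1t i ^ 2 = 1)
    (v1t : Fin N → ℝ) (hv1t : ∑ i, v1t i ^ 2 = 1)
    (δ : ℝ)
    (hδ : δ = specNorm A *
      (Real.sqrt (1 - (u1 ⬝ᵥ u1t) ^ 2) + Real.sqrt (1 - (v1 ⬝ᵥ v1t) ^ 2)) ^ 2)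
    (hδsmall : δ < τ - σmax2)
    (B P B1 : Matrix (Fin M ⊕ Fin N) (Fin M ⊕ Fin N) ℝ)
    (hB : B = Matrix.fromBlocks ((-τ) • 1) A Aᵀ ((-τ) • 1))
    (hP : P = Matrix.fromBlocks (1 - vecMulVec u1t u1t) 0 0 (1 - vecMulVec v1t v1t))
    (hB1 : B1 = P * B * P)
    (r : Fin M ⊕ Fin N → ℝ) (hr : P *ᵥ r = r) :
    ∀ j : ℕ, ∃ w ∈ Krylov B1 r j,
      vnorm (B1 *ᵥ w + r) ≤
        2 * (1 - 2 / (1 + Real.sqrt ((τ + σmax2 + δ) / (τ - σmax2 - δ)))) ^ j * vnorm r := by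
  have hs : 0 ≤ σmax2 := by
    obtain ⟨i, -, rfl⟩ := hσmax2.1
    exact hσ i
  have hσle (i : Fin N) (hi : i ≠ ⟨0, by omega⟩) : |σ i| ≤ σmax2 :=
    (abs_of_nonneg (hσ i)).trans_le (hσmax2.2 ⟨i, hi, rfl⟩)
  have hsvd : A = U.submatrix id (Fin.castLE hMN) * diagonal σ * Vᵀ := by
    rw [hA, mul_eq_submatrix_mul_diagonal U (f := Fin.castLE hMN) (σ := σ) fun i k => by
      simp [hS, Fin.ext_iff]]
  subst hu1 hv1 hB1
  exact minres_bound_approx_largest_general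
    (transpose_mul_self_submatrix_eq_one hU (Fin.castLE_injective hMN)) hV hsvd hs hσle hu1t hv1t
    hδ hδsmall hB hP hr
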